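/- arXiv:2305.04116 — 3 statements merged into one kernel-verified Lean document; each statement's English description precedes it below -/
import Mathlib

section
/- For the expected conditional covariance, if the truth lies in G(r_n, s_n) then the plugin estimator ψ̂_pi = (1/n) Σ_{i=1}^n A_i Y_i − (1/n) Σ_{i=1}^n π̂(X_i) μ̂(X_i) satisfies E(ψ̂_pi − ψ^cov)² ≲ r_n · s_n + r_n + s_n + 1/n, up to a universal positive constant. -/
open MeasureTheory
open scoped ENNReal NNReal

noncomputable section

/-- One-observation sample space `(X, A, Y)` for the expected conditional covariance problem,
with binary treatment `A` and binary outcome `Y`. -/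
abbrev CovSample (d : ℕ) := (Fin d → ℝ) × Bool × Bool

/-- Likelihood of one observation `(x, a, y)` in the binary model parametrized by the
quadruple `(μ, π, η, p_X)`:
`p(x,a,y) = p_X(x) π(x)^a (1-π(x))^{1-a} (μ(x)+(1-π(x))η(x))^{ay} (μ(x)-π(x)η(x))^{(1-a)y}`
`· (1-μ(x)-(1-π(x))η(x))^{a(1-y)} (1-μ(x)+π(x)η(x))^{(1-a)(1-y)}`. -/
def covDens (d : ℕ) (pX μ π η : (Fin d → ℝ) → ℝ) : CovSample d → ℝ := fun ω =>
  pX ω.1 * (if ω.2.1 then π ω.1 else 1 - π ω.1) *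
    (if ω.2.1 then
      (if ω.2.2 then μ ω.1 + (1 - π ω.1) * η ω.1
       else 1 - (μ ω.1 + (1 - π ω.1) * η ω.1))
     else
      (if ω.2.2 then μ ω.1 - π ω.1 * η ω.1
       else 1 - (μ ω.1 - π ω.1 * η ω.1)))

/-- The joint law of one observation `(X, A, Y)` in the binary model. -/
def covLaw (d : ℕ) (pX μ π η : (Fin d → ℝ) → ℝ) : Measure (CovSample d) :=
  ((volume : Measure (Fin d → ℝ)).prod
    ((Measure.count : Measure Bool).prod Measure.count)).withDensity
    fun ω => ENNReal.ofReal (covDens d pX μ π η ω)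

/-- The expected conditional covariance functional `ψ = E[AY] - ∫ π μ p_X`. -/
def covFunc (d : ℕ) (pX μ π η : (Fin d → ℝ) → ℝ) : ℝ :=
  (∫ ω, (if ω.2.1 then (1 : ℝ) else 0) * (if ω.2.2 then (1 : ℝ) else 0)
      ∂(covLaw d pX μ π η)) -
    ∫ x, π x * μ x * pX x

/-- The unit cube `[0,1]^d`. -/
def cube (d : ℕ) : Set (Fin d → ℝ) := Set.univ.pi fun _ => Set.Icc 0 1

/-- The uniform density on the unit cube. -/
def unifCube (d : ℕ) : (Fin d → ℝ) → ℝ := (cube d).indicator 1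

/-!
The mean squared error splits into variance plus squared bias. The estimator is an average of `n`
i.i.d. copies of `A Y - π̂(X) μ̂(X) ∈ [-1, 1]`, so Popoviciu's inequality bounds its variance by
`1 / n`. In the bias the terms `E[A Y]` cancel and `E[(π μ - π̂ μ̂)(X)]` remains; as
`π μ - π̂ μ̂ = (π - π̂) μ + π̂ (μ - μ̂)`, Jensen's inequality bounds its square by `2 s + 2 r`.
-/

section MeanSquaredError

open ProbabilityTheory

variable {Ω : Type*} [MeasurableSpace Ω] {P : Measure Ω}

lemma integrable_sub_sq_of_mem_Icc [IsFiniteMeasure P] {f g : Ω → ℝ} {a b : ℝ}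
    (hf : AEMeasurable f P) (hg : AEMeasurable g P) (hfab : ∀ᵐ ω ∂P, f ω ∈ Set.Icc a b)
    (hgab : ∀ᵐ ω ∂P, g ω ∈ Set.Icc a b) : Integrable (fun ω => (f ω - g ω) ^ 2) P :=
  ((memLp_of_bounded hfab hf.aestronglyMeasurable 2).sub
    (memLp_of_bounded hgab hg.aestronglyMeasurable 2)).integrable_sq

variable [IsProbabilityMeasure P]

lemma lintegral_ofReal_sub_sq_eq_variance_add_sq {S : Ω → ℝ} (hS : MemLp S 2 P) (c : ℝ) :
    ∫⁻ ω, ENNReal.ofReal ((S ω - c) ^ 2) ∂P = ENNReal.ofReal (Var[S; P] + (P[S] - c) ^ 2) := by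
  have hSc : MemLp (fun ω => S ω - c) 2 P := hS.sub (memLp_const c)
  have hmean : ∫ ω, S ω - c ∂P = P[S] - c := by
    simp [integral_sub (hS.integrable one_le_two) (integrable_const c)]
  have hvar : Var[S; P] = ∫ ω, (S ω - c) ^ 2 ∂P - (P[S] - c) ^ 2 := by
    rw [← variance_sub_const hS.aestronglyMeasurable c, variance_eq_sub hSc, hmean]
    rfl
  rw [← ofReal_integral_eq_lintegral_ofReal hSc.integrable_sq (ae_of_all _ fun ω => sq_nonneg _),
    hvar, sub_add_cancel]

variable {ι : Type*} [Fintype ι]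

lemma memLp_sum_pi {Z : Ω → ℝ} (hZ : MemLp Z 2 P) :
    MemLp (fun ω : ι → Ω => ∑ i, Z (ω i)) 2 (Measure.pi fun _ => P) :=
  memLp_finsetSum _ fun i _ => hZ.comp_measurePreserving (measurePreserving_eval (fun _ => P) i)

lemma integral_average_pi [Nonempty ι] {Z : Ω → ℝ} (hZ : Integrable Z P) :
    ∫ ω : ι → Ω, 1 / (Fintype.card ι : ℝ) * ∑ i, Z (ω i) ∂(Measure.pi fun _ => P) = P[Z] := by
  rw [integral_const_mul, integral_finsetSum _ fun i _ => integrable_comp_eval hZ]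
  simp only [integral_comp_eval (μ := fun _ : ι => P) hZ.aestronglyMeasurable, Finset.sum_const,
    Finset.card_univ, nsmul_eq_mul]
  field_simp

lemma variance_average_pi {Z : Ω → ℝ} (hZ : MemLp Z 2 P) :
    Var[fun ω : ι → Ω => 1 / (Fintype.card ι : ℝ) * ∑ i, Z (ω i); Measure.pi fun _ => P] =
      Var[Z; P] / Fintype.card ι := by
  have hsum := variance_sum_pi (μ := fun _ : ι => P) fun _ => hZ
  simp only [Finset.sum_fn, Finset.sum_const, Finset.card_univ, nsmul_eq_mul] at hsum
  rw [variance_const_mul, hsum]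
  field_simp

lemma lintegral_ofReal_average_sub_sq_le [Nonempty ι] {Z : Ω → ℝ} {a b : ℝ}
    (hZ : AEMeasurable Z P) (hab : ∀ᵐ ω ∂P, Z ω ∈ Set.Icc a b) (c : ℝ) :
    ∫⁻ ω : ι → Ω, ENNReal.ofReal ((1 / (Fintype.card ι : ℝ) * ∑ i, Z (ω i) - c) ^ 2)
        ∂(Measure.pi fun _ => P) ≤
      ENNReal.ofReal (((b - a) / 2) ^ 2 / Fintype.card ι + (P[Z] - c) ^ 2) := by
  have hZ2 : MemLp Z 2 P := memLp_of_bounded hab hZ.aestronglyMeasurable 2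
  rw [lintegral_ofReal_sub_sq_eq_variance_add_sq ((memLp_sum_pi hZ2).const_mul _),
    integral_average_pi (hZ2.integrable one_le_two), variance_average_pi hZ2]
  gcongr
  exact variance_le_sq_of_bounded hab hZ

lemma sq_integral_le_integral_of_sq_le {f g : Ω → ℝ} (hg : Integrable g P)
    (hfg : ∀ᵐ ω ∂P, f ω ^ 2 ≤ g ω) : (∫ ω, f ω ∂P) ^ 2 ≤ ∫ ω, g ω ∂P := by
  by_cases hf : AEStronglyMeasurable f P
  · have hf2 : MemLp f 2 P := (memLp_two_iff_integrable_sq hf).2 <|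
      hg.mono' (hf.pow 2) (by simpa using hfg)
    calc (∫ ω, f ω ∂P) ^ 2 ≤ ∫ ω, f ω ^ 2 ∂P := by
          simpa [variance_eq_sub hf2] using variance_nonneg f P
      _ ≤ ∫ ω, g ω ∂P := integral_mono_ae hf2.integrable_sq hg hfg
  · rw [integral_non_aestronglyMeasurable hf, zero_pow two_ne_zero]
    exact integral_nonneg_of_ae (hfg.mono fun ω h => (sq_nonneg _).trans h)

lemma mul_sub_mul_sq_le {a b a' b' : ℝ} (hb : |b| ≤ 1) (ha' : |a'| ≤ 1) :
    (a * b - a' * b') ^ 2 ≤ 2 * (a - a') ^ 2 + 2 * (b - b') ^ 2 := by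
  calc (a * b - a' * b') ^ 2 = ((a - a') * b + a' * (b - b')) ^ 2 := by ring
    _ ≤ 2 * (((a - a') * b) ^ 2 + (a' * (b - b')) ^ 2) := add_sq_le
    _ = 2 * ((a - a') ^ 2 * b ^ 2) + 2 * (a' ^ 2 * (b - b') ^ 2) := by ring
    _ ≤ 2 * ((a - a') ^ 2 * 1) + 2 * (1 * (b - b') ^ 2) := by
      gcongr <;> rwa [sq_le_one_iff_abs_le_one]
    _ = 2 * (a - a') ^ 2 + 2 * (b - b') ^ 2 := by ring

lemma sq_integral_mul_sub_mul_le {f g f' g' : Ω → ℝ}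
    (hf : Integrable (fun ω => (f ω - f' ω) ^ 2) P) (hg : Integrable (fun ω => (g ω - g' ω) ^ 2) P)
    (hg1 : ∀ᵐ ω ∂P, |g ω| ≤ 1) (hf1 : ∀ᵐ ω ∂P, |f' ω| ≤ 1) :
    (∫ ω, f ω * g ω - f' ω * g' ω ∂P) ^ 2 ≤
      2 * ∫ ω, (f ω - f' ω) ^ 2 ∂P + 2 * ∫ ω, (g ω - g' ω) ^ 2 ∂P := by
  rw [← integral_const_mul, ← integral_const_mul,
    ← integral_add (hf.const_mul 2) (hg.const_mul 2)]
  refine sq_integral_le_integral_of_sq_le ((hf.const_mul 2).add (hg.const_mul 2)) ?_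
  filter_upwards [hg1, hf1] with ω hgω hfω using mul_sub_mul_sq_le hgω hfω

lemma sq_integral_mul_sub_mul_le_of_mem_Icc {f g f' g' : Ω → ℝ} (hf : AEMeasurable f P)
    (hg : AEMeasurable g P) (hf' : AEMeasurable f' P) (hg' : AEMeasurable g' P)
    (hf1 : ∀ ω, f ω ∈ Set.Icc 0 1) (hg1 : ∀ ω, g ω ∈ Set.Icc 0 1)
    (hf'1 : ∀ ω, f' ω ∈ Set.Icc 0 1) (hg'1 : ∀ ω, g' ω ∈ Set.Icc 0 1) :
    (∫ ω, f ω * g ω - f' ω * g' ω ∂P) ^ 2 ≤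
      2 * ∫ ω, (f ω - f' ω) ^ 2 ∂P + 2 * ∫ ω, (g ω - g' ω) ^ 2 ∂P := by
  have habs : ∀ {x : ℝ}, x ∈ Set.Icc 0 1 → |x| ≤ 1 := fun hx => (abs_of_nonneg hx.1).trans_le hx.2
  exact sq_integral_mul_sub_mul_le
    (integrable_sub_sq_of_mem_Icc hf hf' (ae_of_all _ hf1) (ae_of_all _ hf'1))
    (integrable_sub_sq_of_mem_Icc hg hg' (ae_of_all _ hg1) (ae_of_all _ hg'1))
    (ae_of_all _ fun ω => habs (hg1 ω)) (ae_of_all _ fun ω => habs (hf'1 ω))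

end MeanSquaredError

section Density

variable {𝓧 𝓩 : Type*} [MeasurableSpace 𝓧] [MeasurableSpace 𝓩] {ν : Measure 𝓧}

lemma integral_withDensity_ofReal {p : 𝓧 → ℝ} (hp : Measurable p) (hp0 : ∀ x, 0 ≤ p x)
    (g : 𝓧 → ℝ) :
    ∫ x, g x ∂(ν.withDensity fun x => ENNReal.ofReal (p x)) = ∫ x, g x * p x ∂ν := by
  rw [integral_withDensity_eq_integral_toReal_smul hp.ennreal_ofReal
    (ae_of_all _ fun _ => ENNReal.ofReal_lt_top)]
  simp only [ENNReal.toReal_ofReal (hp0 _), smul_eq_mul, mul_comm]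

lemma isProbabilityMeasure_withDensity_ofReal {p : 𝓧 → ℝ} (hp0 : ∀ x, 0 ≤ p x)
    (hp1 : ∫ x, p x ∂ν = 1) :
    IsProbabilityMeasure (ν.withDensity fun x => ENNReal.ofReal (p x)) := by
  constructor
  rw [withDensity_apply _ .univ, Measure.restrict_univ,
    ← ofReal_integral_eq_lintegral_ofReal (integrable_of_integral_eq_one hp1) (ae_of_all _ hp0),
    hp1, ENNReal.ofReal_one]

lemma map_fst_withDensity_prod [SFinite ν] {τ : Measure 𝓩} [SFinite τ] {f : 𝓧 × 𝓩 → ℝ≥0∞}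
    (hf : Measurable f) :
    ((ν.prod τ).withDensity f).map Prod.fst = ν.withDensity fun x => ∫⁻ z, f (x, z) ∂τ := by
  ext s hs
  rw [Measure.map_apply measurable_fst hs, withDensity_apply _ (measurable_fst hs),
    withDensity_apply _ hs, ← Set.prod_univ, ← Measure.prod_restrict, Measure.restrict_univ,
    lintegral_prod _ hf.aemeasurable]

end Density

section BinaryModel

variable {d : ℕ} {pX μ π η : (Fin d → ℝ) → ℝ}

lemma measurable_covDens (hpX : Measurable pX) (hμ : Measurable μ) (hπ : Measurable π)
    (hη : Measurable η) : Measurable (covDens d pX μ π η) := by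
  refine measurable_from_prod_countable_left fun ⟨a, y⟩ => ?_
  cases a <;> cases y <;> simp only [covDens, Bool.false_eq_true, if_true, if_false] <;> fun_prop

lemma lintegral_ofReal_covDens {x : Fin d → ℝ} (hp : 0 ≤ pX x) (hπ : 0 ≤ π x ∧ π x ≤ 1)
    (h₁ : 0 ≤ μ x + (1 - π x) * η x ∧ μ x + (1 - π x) * η x ≤ 1)
    (h₀ : 0 ≤ μ x - π x * η x ∧ μ x - π x * η x ≤ 1) :
    ∫⁻ z, ENNReal.ofReal (covDens d pX μ π η (x, z))
        ∂((Measure.count : Measure Bool).prod Measure.count) = ENNReal.ofReal (pX x) := by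
  have hnonneg : ∀ a y, 0 ≤ covDens d pX μ π η (x, a, y) := by
    rintro (_ | _) (_ | _) <;>
      exact mul_nonneg (mul_nonneg hp (by grind)) (by grind)
  have hsum : ∑ a, ∑ y, covDens d pX μ π η (x, a, y) = pX x := by
    simp only [covDens, Fintype.sum_bool, Bool.false_eq_true, if_true, if_false]
    ring
  rw [lintegral_prod _ (measurable_of_countable _).aemeasurable]
  simp only [lintegral_count, tsum_fintype]
  rw [← hsum, ENNReal.ofReal_sum_of_nonneg fun a _ => Finset.sum_nonneg fun y _ => hnonneg a y]
  simp only [ENNReal.ofReal_sum_of_nonneg fun y _ => hnonneg _ y]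

lemma hasLaw_fst_covLaw (hpX : Measurable pX) (hp0 : ∀ x, 0 ≤ pX x)
    (hμ : Measurable μ) (hπ : Measurable π) (hη : Measurable η)
    (hπ1 : ∀ x, 0 ≤ π x ∧ π x ≤ 1)
    (h₁ : ∀ x, 0 ≤ μ x + (1 - π x) * η x ∧ μ x + (1 - π x) * η x ≤ 1)
    (h₀ : ∀ x, 0 ≤ μ x - π x * η x ∧ μ x - π x * η x ≤ 1) :
    ProbabilityTheory.HasLaw Prod.fst (volume.withDensity fun x => ENNReal.ofReal (pX x))
      (covLaw d pX μ π η) where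
  aemeasurable := measurable_fst.aemeasurable
  map_eq := by
    rw [covLaw, map_fst_withDensity_prod (measurable_covDens hpX hμ hπ hη).ennreal_ofReal]
    simp only [lintegral_ofReal_covDens (hp0 _) (hπ1 _) (h₁ _) (h₀ _)]

end BinaryModel

lemma plugin_bias_eq_integral_sub {Ω 𝓧 : Type*} [MeasurableSpace Ω] [MeasurableSpace 𝓧]
    {P : Measure Ω} {Q : Measure 𝓧} {X : Ω → 𝓧} (hX : ProbabilityTheory.HasLaw X Q P)
    {W : Ω → ℝ} {g g' : 𝓧 → ℝ} (hW : Integrable W P) (hg : Integrable g Q)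
    (hg' : Integrable g' Q) :
    ∫ ω, W ω - g' (X ω) ∂P - (∫ ω, W ω ∂P - ∫ x, g x ∂Q) = ∫ x, g x - g' x ∂Q := by
  have hcomp : ∫ ω, g' (X ω) ∂P = ∫ x, g' x ∂Q := hX.integral_comp hg'.aestronglyMeasurable
  have hg'X : Integrable (fun ω => g' (X ω)) P :=
    (hX.map_eq ▸ hg').comp_aemeasurable hX.aemeasurable
  rw [integral_sub hW hg'X, integral_sub hg hg', hcomp]
  ring

lemma lintegral_ofReal_plugin_sub_sq_le {Ω 𝓧 ι : Type*} [MeasurableSpace Ω] [MeasurableSpace 𝓧]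
    [Fintype ι] [Nonempty ι] {P : Measure Ω} [IsProbabilityMeasure P] {Q : Measure 𝓧} {X : Ω → 𝓧}
    (hX : ProbabilityTheory.HasLaw X Q P) {W : Ω → ℝ} {g g' : 𝓧 → ℝ} (hW : AEMeasurable W P)
    (hg : Integrable g Q) (hg' : Measurable g') (hW1 : ∀ ω, W ω ∈ Set.Icc 0 1)
    (hg'1 : ∀ x, g' x ∈ Set.Icc 0 1) :
    ∫⁻ ω : ι → Ω, ENNReal.ofReal
        ((1 / (Fintype.card ι : ℝ) * ∑ i, W (ω i) - 1 / (Fintype.card ι : ℝ) * ∑ i, g' (X (ω i)) -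
          (∫ ω, W ω ∂P - ∫ x, g x ∂Q)) ^ 2) ∂(Measure.pi fun _ => P) ≤
      ENNReal.ofReal (1 / Fintype.card ι + (∫ x, g x - g' x ∂Q) ^ 2) := by
  have : IsProbabilityMeasure Q := hX.isProbabilityMeasure_iff.1 ‹_›
  have hZ1 : ∀ ω, W ω - g' (X ω) ∈ Set.Icc (-1) 1 := fun ω =>
    ⟨by linarith [(hW1 ω).1, (hg'1 (X ω)).2], by linarith [(hW1 ω).2, (hg'1 (X ω)).1]⟩
  have hmse := lintegral_ofReal_average_sub_sq_le (ι := ι)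
    (hW.sub (hg'.comp_aemeasurable hX.aemeasurable)) (ae_of_all P hZ1)
    (∫ ω, W ω ∂P - ∫ x, g x ∂Q)
  have hbias := plugin_bias_eq_integral_sub hX (.of_mem_Icc 0 1 hW (ae_of_all _ hW1)) hg
    (.of_mem_Icc 0 1 hg'.aemeasurable (ae_of_all _ hg'1))
  have hpopoviciu : (((1 : ℝ) - -1) / 2) ^ 2 = 1 := by norm_num
  simpa only [Pi.sub_apply, Function.comp_apply, Finset.sum_sub_distrib, mul_sub, hbias,
    hpopoviciu] using hmse

theorem stmt8_general {Ω 𝓧 : Type*} [MeasurableSpace Ω] [MeasurableSpace 𝓧] {P : Measure Ω}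
    {ν : Measure 𝓧} {n : ℕ} (hn : 0 < n) {pX : 𝓧 → ℝ} (hpX : Measurable pX)
    (hp0 : ∀ x, 0 ≤ pX x) (hp1 : ∫ x, pX x ∂ν = 1) {X : Ω → 𝓧}
    (hX : ProbabilityTheory.HasLaw X (ν.withDensity fun x => ENNReal.ofReal (pX x)) P)
    {A Y : Ω → ℝ} (hA : AEMeasurable A P) (hY : AEMeasurable Y P)
    (hA1 : ∀ ω, A ω ∈ Set.Icc 0 1) (hY1 : ∀ ω, Y ω ∈ Set.Icc 0 1)
    {μ π muhat pihat : 𝓧 → ℝ} (hμ : Measurable μ) (hπ : Measurable π) (hmuhat : Measurable muhat)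
    (hpihat : Measurable pihat) (hμ1 : ∀ x, μ x ∈ Set.Icc 0 1) (hπ1 : ∀ x, π x ∈ Set.Icc 0 1)
    (hmuhat1 : ∀ x, muhat x ∈ Set.Icc 0 1) (hpihat1 : ∀ x, pihat x ∈ Set.Icc 0 1) {r s : ℝ}
    (hr : ∫ x, (μ x - muhat x) ^ 2 * pX x ∂ν ≤ r) (hs : ∫ x, (π x - pihat x) ^ 2 * pX x ∂ν ≤ s) :
    ∫⁻ ω, ENNReal.ofReal
        ((1 / (n : ℝ) * ∑ i : Fin n, A (ω i) * Y (ω i) -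
          1 / (n : ℝ) * ∑ i : Fin n, pihat (X (ω i)) * muhat (X (ω i)) -
          (∫ ω, A ω * Y ω ∂P - ∫ x, π x * μ x * pX x ∂ν)) ^ 2) ∂(Measure.pi fun _ => P) ≤
      ENNReal.ofReal (1 / n + (2 * s + 2 * r)) := by
  set Q := ν.withDensity fun x => ENNReal.ofReal (pX x)
  have : IsProbabilityMeasure Q := isProbabilityMeasure_withDensity_ofReal hp0 hp1
  have : IsProbabilityMeasure P := hX.isProbabilityMeasure
  have : NeZero n := ⟨hn.ne'⟩
  have hQ : ∀ g : 𝓧 → ℝ, ∫ x, g x ∂Q = ∫ x, g x * pX x ∂ν := integral_withDensity_ofReal hpX hp0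
  have hπμ : Integrable (fun x => π x * μ x) Q := .of_mem_Icc 0 1 (hπ.mul hμ).aemeasurable
    (ae_of_all _ fun x => unitInterval.mul_mem (hπ1 x) (hμ1 x))
  have hmse := lintegral_ofReal_plugin_sub_sq_le (ι := Fin n) hX (hA.mul hY) hπμ
    (hpihat.mul hmuhat) (fun ω => unitInterval.mul_mem (hA1 ω) (hY1 ω))
    fun x => unitInterval.mul_mem (hpihat1 x) (hmuhat1 x)
  have hbias := sq_integral_mul_sub_mul_le_of_mem_Icc hπ.aemeasurable hμ.aemeasurable
    hpihat.aemeasurable hmuhat.aemeasurable hπ1 hμ1 hpihat1 hmuhat1 (P := Q)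
  rw [hQ fun x => (π x - pihat x) ^ 2, hQ fun x => (μ x - muhat x) ^ 2] at hbias
  rw [Fintype.card_fin, hQ fun x => π x * μ x] at hmse
  refine hmse.trans (ENNReal.ofReal_le_ofReal ?_)
  gcongr
  exact hbias.trans (by gcongr)

/-- Theorem 2, part 3, plugin: if the truth lies in `𝒢(rₙ, sₙ)` then the
plugin estimator `ψ̂_pi = (1/n)∑ᵢ AᵢYᵢ - (1/n)∑ᵢ π̂(Xᵢ)μ̂(Xᵢ)` of the expected conditional
covariance satisfies `E(ψ̂_pi - ψ^cov)² ≲ rₙ sₙ + rₙ + sₙ + 1/n`. -/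
theorem stmt8 :
    ∃ C > (0 : ℝ),
      ∀ (d n : ℕ), 0 < n →
      ∀ pX : (Fin d → ℝ) → ℝ, Measurable pX → (∀ x, 0 ≤ pX x) → (∫ x, pX x = 1) →
      ∀ μ π η : (Fin d → ℝ) → ℝ, Measurable μ → Measurable π → Measurable η →
        (∀ x, 0 ≤ μ x ∧ μ x ≤ 1) → (∀ x, 0 ≤ π x ∧ π x ≤ 1) →
        (∀ x, 0 ≤ μ x + (1 - π x) * η x ∧ μ x + (1 - π x) * η x ≤ 1) →
        (∀ x, 0 ≤ μ x - π x * η x ∧ μ x - π x * η x ≤ 1) →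
      ∀ muhat pihat : (Fin d → ℝ) → ℝ, Measurable muhat → Measurable pihat →
        (∀ x, 0 ≤ muhat x ∧ muhat x ≤ 1) → (∀ x, 0 ≤ pihat x ∧ pihat x ≤ 1) →
      ∀ r s : ℝ, 0 < r → 0 < s →
        Integrable (fun x => (μ x - muhat x) ^ 2 * pX x) →
        (∫ x, (μ x - muhat x) ^ 2 * pX x) ≤ r →
        Integrable (fun x => (π x - pihat x) ^ 2 * pX x) →
        (∫ x, (π x - pihat x) ^ 2 * pX x) ≤ s →
      ∫⁻ ω, ENNReal.ofReal
          ((((1 : ℝ) / n) * (∑ i : Fin n,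
              (if (ω i).2.1 then (1 : ℝ) else 0) * (if (ω i).2.2 then (1 : ℝ) else 0)) -
            ((1 : ℝ) / n) * (∑ i : Fin n, pihat (ω i).1 * muhat (ω i).1) -
            covFunc d pX μ π η) ^ 2)
          ∂(Measure.pi fun _ : Fin n => covLaw d pX μ π η) ≤
        ENNReal.ofReal (C * (r * s + r + s + 1 / n)) := by
  refine ⟨2, two_pos, fun d n hn pX hpX hp0 hp1 μ π η hμ hπ hη hμ1 hπ1 h₁ h₀ muhat pihat hmuhat
    hpihat hmuhat1 hpihat1 r s hr hs _ hμr _ hπs => ?_⟩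
  have hite : Measurable fun b : Bool => if b then (1 : ℝ) else 0 := measurable_of_countable _
  have hite1 : ∀ b : Bool, (if b then (1 : ℝ) else 0) ∈ Set.Icc 0 1 := by rintro (_ | _) <;> simp
  refine (stmt8_general hn hpX hp0 hp1 (hasLaw_fst_covLaw hpX hp0 hμ hπ hη hπ1 h₁ h₀)
    (A := fun ω => if ω.2.1 then 1 else 0) (Y := fun ω => if ω.2.2 then 1 else 0)
    (hite.comp measurable_snd.fst).aemeasurable (hite.comp measurable_snd.snd).aemeasurable
    (fun _ => hite1 _) (fun _ => hite1 _) hμ hπ hmuhat hpihat hμ1 hπ1 hmuhat1 hpihat1 hμr hπs).trans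
    (ENNReal.ofReal_le_ofReal ?_)
  have : 0 ≤ 1 / (n : ℝ) := by positivity
  linarith [mul_pos hr hs]
end
end

section
/- For the expected conditional covariance, if the truth lies in G(r_n, s_n) then the first-order estimator ψ̂_fo = (1/n) Σ_{i=1}^n (A_i − π̂(X_i))(Y_i − μ̂(X_i)) satisfies E(ψ̂_fo − ψ^cov)² ≲ r_n · s_n + 1/n, up to a universal positive constant. -/
open MeasureTheory
open scoped ENNReal NNReal

noncomputable section

open ProbabilityTheory

/-!
The bias of one summand `(A - π̂(X)) (Y - μ̂(X))` is `E[(π(X) - π̂(X)) (μ(X) - μ̂(X))]`: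
conditioning on `X` replaces `A` by `π(X)` and `Y` by `μ(X)` in every product with only one of them,
and the remaining term `E[AY] - E[π(X) μ(X)]` is the target. Cauchy–Schwarz bounds the squared bias
by `r s`. The summands take values in `[-1, 1]`, so the variance of their mean is at most `1 / n`.
-/

section CauchySchwarz

variable {Ω : Type*} {m₀ : MeasurableSpace Ω} {ν : Measure Ω}

lemma inner_toLp_toLp {f g : Ω → ℝ} (hf : MemLp f 2 ν) (hg : MemLp g 2 ν) :
    inner ℝ (hf.toLp f) (hg.toLp g) = ∫ ω, f ω * g ω ∂ν := by
  rw [L2.inner_def]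
  refine integral_congr_ae ?_
  filter_upwards [hf.coeFn_toLp, hg.coeFn_toLp] with ω hfω hgω
  rw [hfω, hgω, real_inner_comm]
  rfl

lemma sq_integral_mul_le {f g : Ω → ℝ} (hf : MemLp f 2 ν) (hg : MemLp g 2 ν) :
    (∫ ω, f ω * g ω ∂ν) ^ 2 ≤ (∫ ω, f ω ^ 2 ∂ν) * ∫ ω, g ω ^ 2 ∂ν := by
  simpa only [inner_toLp_toLp, sq] using real_inner_mul_inner_self_le (hf.toLp f) (hg.toLp g)

end CauchySchwarz

section SampleMean

variable {Ω : Type*} {m₀ : MeasurableSpace Ω} {P : Measure Ω} [IsProbabilityMeasure P]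

lemma lintegral_sq_sub_const {T : Ω → ℝ} (hT : MemLp T 2 P) (c : ℝ) :
    ∫⁻ ω, ENNReal.ofReal ((T ω - c) ^ 2) ∂P =
      ENNReal.ofReal ((∫ ω, T ω ∂P - c) ^ 2 + Var[T; P]) := by
  have hTc : MemLp (fun ω => T ω - c) 2 P := hT.sub (memLp_const c)
  have mean_sub : ∫ ω, (T ω - c) ∂P = ∫ ω, T ω ∂P - c := by
    simp [integral_sub (hT.integrable one_le_two) (integrable_const c)]
  have second_moment := variance_eq_sub hTc
  rw [variance_sub_const hT.aestronglyMeasurable, mean_sub, eq_sub_iff_add_eq'] at second_moment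
  rw [second_moment]
  exact (ofReal_integral_eq_lintegral_ofReal hTc.integrable_sq
    (ae_of_all _ fun _ => sq_nonneg _)).symm

/-- The empirical mean `(1/n) ∑ᵢ Z(ωᵢ)` of a statistic `Z` over a sample of size `n`, as a function
of the sample. It is `0` for `n = 0`. -/
def sampleMean (Z : Ω → ℝ) (n : ℕ) (ω : Fin n → Ω) : ℝ :=
  (1 : ℝ) / n * ∑ i, Z (ω i)

variable {Z : Ω → ℝ}

lemma memLp_sampleMean {p : ℝ≥0∞} (hZ : MemLp Z p P) (n : ℕ) :
    MemLp (sampleMean Z n) p (Measure.pi fun _ => P) :=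
  (memLp_finsetSum _ fun i _ =>
    hZ.comp_measurePreserving (measurePreserving_eval (fun _ => P) i)).const_mul _

lemma integral_sampleMean (hZ : Integrable Z P) {n : ℕ} (hn : n ≠ 0) :
    ∫ ω, sampleMean Z n ω ∂(Measure.pi fun _ => P) = ∫ ω, Z ω ∂P := by
  have integral_coord (i : Fin n) :
      ∫ ω : Fin n → Ω, Z (ω i) ∂(Measure.pi fun _ => P) = ∫ ω, Z ω ∂P :=
    integral_comp_eval (μ := fun _ : Fin n => P) hZ.aestronglyMeasurable
  simp only [sampleMean]
  rw [integral_const_mul,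
    integral_finsetSum _ fun i _ => integrable_comp_eval (μ := fun _ : Fin n => P) hZ]
  simp only [integral_coord, Finset.sum_const, Finset.card_univ, Fintype.card_fin, nsmul_eq_mul]
  field_simp

lemma variance_sampleMean (hZ : MemLp Z 2 P) (n : ℕ) :
    Var[sampleMean Z n; Measure.pi fun _ => P] = Var[Z; P] / n := by
  have variance_sum : Var[fun ω : Fin n → Ω => ∑ i, Z (ω i); Measure.pi fun _ => P] =
      n * Var[Z; P] := by
    simpa [← Finset.sum_fn] using variance_sum_pi (μ := fun _ : Fin n => P) fun _ => hZ
  unfold sampleMean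
  rw [variance_const_mul, variance_sum]
  rcases eq_or_ne n 0 with rfl | hn
  · simp
  · field_simp

lemma lintegral_sq_sampleMean_sub (hZ : MemLp Z 2 P) {n : ℕ} (hn : n ≠ 0) (c : ℝ) :
    ∫⁻ ω, ENNReal.ofReal ((sampleMean Z n ω - c) ^ 2) ∂(Measure.pi fun _ => P) =
      ENNReal.ofReal ((∫ ω, Z ω ∂P - c) ^ 2 + Var[Z; P] / n) := by
  rw [lintegral_sq_sub_const (memLp_sampleMean hZ n),
    integral_sampleMean (hZ.integrable one_le_two) hn, variance_sampleMean hZ]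

end SampleMean

section Residuals

variable {Ω : Type*} {m m₀ : MeasurableSpace Ω} {P : Measure Ω}

lemma integral_mul_eq_of_condExp_ae_eq (hm : m ≤ m₀) [SigmaFinite (P.trim hm)] {f g h : Ω → ℝ}
    (hf : Integrable f P) (hfg : Integrable (f * g) P) (hg : AEStronglyMeasurable[m] g P)
    (hh : P[f | m] =ᵐ[P] h) : ∫ ω, f ω * g ω ∂P = ∫ ω, h ω * g ω ∂P :=
  calc ∫ ω, f ω * g ω ∂P = ∫ ω, (P[f * g | m]) ω ∂P := (integral_condExp hm).symm
    _ = ∫ ω, h ω * g ω ∂P := integral_congr_ae <|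
      (condExp_mul_of_aestronglyMeasurable_right hg hfg hf).trans (hh.mul .rfl)

lemma integral_sub_mul_sub {f g a b : Ω → ℝ} (hf : MemLp f 2 P) (hg : MemLp g 2 P)
    (ha : MemLp a 2 P) (hb : MemLp b 2 P) :
    ∫ ω, (f ω - a ω) * (g ω - b ω) ∂P =
      ∫ ω, f ω * g ω ∂P - ∫ ω, f ω * b ω ∂P - ∫ ω, g ω * a ω ∂P + ∫ ω, a ω * b ω ∂P := by
  have expand : (fun ω => (f ω - a ω) * (g ω - b ω)) = f * g - f * b - g * a + a * b := by
    ext ω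
    simp only [Pi.add_apply, Pi.sub_apply, Pi.mul_apply]
    ring
  have hfg := hf.integrable_mul hg
  have hfb := hf.integrable_mul hb
  have hga := hg.integrable_mul ha
  rw [expand, integral_add' ((hfg.sub hfb).sub hga) (ha.integrable_mul hb),
    integral_sub' (hfg.sub hfb) hga, integral_sub' hfg hfb]
  rfl

variable {A Y π μ πhat μhat : Ω → ℝ}

lemma integral_residual_mul_residual [IsFiniteMeasure P] (hm : m ≤ m₀)
    (hA : MemLp A 2 P) (hY : MemLp Y 2 P)
    (hπ : P[A | m] =ᵐ[P] π) (hμ : P[Y | m] =ᵐ[P] μ)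
    (hπhatm : AEStronglyMeasurable[m] πhat P) (hμhatm : AEStronglyMeasurable[m] μhat P)
    (hπhat : MemLp πhat 2 P) (hμhat : MemLp μhat 2 P) :
    ∫ ω, (A ω - πhat ω) * (Y ω - μhat ω) ∂P - (∫ ω, A ω * Y ω ∂P - ∫ ω, π ω * μ ω ∂P) =
      ∫ ω, (π ω - πhat ω) * (μ ω - μhat ω) ∂P := by
  have hπ2 : MemLp π 2 P := (hA.condExp one_le_two).ae_eq hπ
  have hμ2 : MemLp μ 2 P := (hY.condExp one_le_two).ae_eq hμ
  have integral_A_mul : ∫ ω, A ω * μhat ω ∂P = ∫ ω, π ω * μhat ω ∂P :=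
    integral_mul_eq_of_condExp_ae_eq hm (hA.integrable one_le_two) (hA.integrable_mul hμhat)
      hμhatm hπ
  have integral_Y_mul : ∫ ω, Y ω * πhat ω ∂P = ∫ ω, μ ω * πhat ω ∂P :=
    integral_mul_eq_of_condExp_ae_eq hm (hY.integrable one_le_two) (hY.integrable_mul hπhat)
      hπhatm hμ
  rw [integral_sub_mul_sub hA hY hπhat hμhat, integral_sub_mul_sub hπ2 hμ2 hπhat hμhat,
    integral_A_mul, integral_Y_mul]
  ring

lemma sub_mul_sub_mem_Icc {x y s t : ℝ} (hx : x ∈ Set.Icc (0 : ℝ) 1) (hy : y ∈ Set.Icc (0 : ℝ) 1)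
    (hs : s ∈ Set.Icc (0 : ℝ) 1) (ht : t ∈ Set.Icc (0 : ℝ) 1) :
    (x - s) * (y - t) ∈ Set.Icc (-1 : ℝ) 1 := by
  have abs_sub_le {u v : ℝ} (hu : u ∈ Set.Icc (0 : ℝ) 1) (hv : v ∈ Set.Icc (0 : ℝ) 1) :
      |u - v| ≤ 1 := abs_sub_le_of_nonneg_of_le hu.1 hu.2 hv.1 hv.2
  rw [Set.mem_Icc, ← abs_le, abs_mul]
  exact mul_le_one₀ (abs_sub_le hx hs) (abs_nonneg _) (abs_sub_le hy ht)

theorem stmt9_general [IsProbabilityMeasure P] (hm : m ≤ m₀) {n : ℕ} (hn : n ≠ 0)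
    (hAm : AEStronglyMeasurable A P) (hYm : AEStronglyMeasurable Y P)
    (hA : ∀ᵐ ω ∂P, A ω ∈ Set.Icc (0 : ℝ) 1) (hY : ∀ᵐ ω ∂P, Y ω ∈ Set.Icc (0 : ℝ) 1)
    (hπ : P[A | m] =ᵐ[P] π) (hμ : P[Y | m] =ᵐ[P] μ)
    (hπhatm : AEStronglyMeasurable[m] πhat P) (hμhatm : AEStronglyMeasurable[m] μhat P)
    (hπhat : ∀ᵐ ω ∂P, πhat ω ∈ Set.Icc (0 : ℝ) 1) (hμhat : ∀ᵐ ω ∂P, μhat ω ∈ Set.Icc (0 : ℝ) 1)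
    {r s : ℝ} (hr : ∫ ω, (μ ω - μhat ω) ^ 2 ∂P ≤ r)
    (hs : ∫ ω, (π ω - πhat ω) ^ 2 ∂P ≤ s) :
    ∫⁻ ω, ENNReal.ofReal ((sampleMean (fun ω => (A ω - πhat ω) * (Y ω - μhat ω)) n ω -
        (∫ ω, A ω * Y ω ∂P - ∫ ω, π ω * μ ω ∂P)) ^ 2) ∂(Measure.pi fun _ => P) ≤
      ENNReal.ofReal (r * s + 1 / n) := by
  have hA2 : MemLp A 2 P := memLp_of_bounded hA hAm 2
  have hY2 : MemLp Y 2 P := memLp_of_bounded hY hYm 2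
  have hπhat2 : MemLp πhat 2 P := memLp_of_bounded hπhat (hπhatm.mono hm) 2
  have hμhat2 : MemLp μhat 2 P := memLp_of_bounded hμhat (hμhatm.mono hm) 2
  have hZm : AEStronglyMeasurable (fun ω => (A ω - πhat ω) * (Y ω - μhat ω)) P :=
    (hA2.sub hπhat2).aestronglyMeasurable.mul (hY2.sub hμhat2).aestronglyMeasurable
  have hZ : ∀ᵐ ω ∂P, (A ω - πhat ω) * (Y ω - μhat ω) ∈ Set.Icc (-1 : ℝ) 1 := by
    filter_upwards [hA, hY, hπhat, hμhat] with ω using sub_mul_sub_mem_Icc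
  rw [lintegral_sq_sampleMean_sub (memLp_of_bounded hZ hZm 2) hn,
    integral_residual_mul_residual hm hA2 hY2 hπ hμ hπhatm hμhatm hπhat2 hμhat2]
  have bias_sq_le : (∫ ω, (π ω - πhat ω) * (μ ω - μhat ω) ∂P) ^ 2 ≤ r * s := by
    have hπ_sub : MemLp (fun ω => π ω - πhat ω) 2 P :=
      ((hA2.condExp one_le_two).ae_eq hπ).sub hπhat2
    have hμ_sub : MemLp (fun ω => μ ω - μhat ω) 2 P :=
      ((hY2.condExp one_le_two).ae_eq hμ).sub hμhat2
    have hs0 : 0 ≤ s := (integral_nonneg fun _ => sq_nonneg _).trans hs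
    rw [mul_comm r s]
    exact (sq_integral_mul_le hπ_sub hμ_sub).trans <|
      mul_le_mul hs hr (integral_nonneg fun _ => sq_nonneg _) hs0
  have variance_le_one : Var[fun ω => (A ω - πhat ω) * (Y ω - μhat ω); P] ≤ 1 := by
    convert variance_le_sq_of_bounded hZ hZm.aemeasurable using 1
    norm_num
  gcongr

end Residuals

lemma count_prod_count {α β : Type*} [MeasurableSpace α] [MeasurableSpace β] [Countable α]
    [Countable β] [MeasurableSingletonClass α] [MeasurableSingletonClass β] :
    (Measure.count : Measure α).prod (Measure.count : Measure β) = Measure.count := by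
  refine Measure.ext_of_singleton fun ⟨a, b⟩ => ?_
  rw [← Set.singleton_prod_singleton, Measure.prod_prod, Set.singleton_prod_singleton]
  simp only [Measure.count_singleton, mul_one]

section BinaryModel

variable {d : ℕ}

/-- The treatment indicator `A` of an observation, as a real number. -/
def treatment (ω : CovSample d) : ℝ := if ω.2.1 then 1 else 0

/-- The outcome indicator `Y` of an observation, as a real number. -/
def outcome (ω : CovSample d) : ℝ := if ω.2.2 then 1 else 0

/-- The quadruple `(p_X, μ, π, η)` parametrizes a law of the binary model: `p_X` is a probability
density, and `μ`, `π` and the regressions `μ + (1 - π) η` and `μ - π η` of the outcome in the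
treated and the untreated arm are probabilities. -/
structure IsCovModel (pX μ π η : (Fin d → ℝ) → ℝ) : Prop where
  measurable_pX : Measurable pX
  pX_nonneg : ∀ x, 0 ≤ pX x
  integral_pX : ∫ x, pX x = 1
  measurable_μ : Measurable μ
  measurable_π : Measurable π
  measurable_η : Measurable η
  μ_mem : ∀ x, μ x ∈ Set.Icc (0 : ℝ) 1
  π_mem : ∀ x, π x ∈ Set.Icc (0 : ℝ) 1
  treated_mem : ∀ x, μ x + (1 - π x) * η x ∈ Set.Icc (0 : ℝ) 1
  untreated_mem : ∀ x, μ x - π x * η x ∈ Set.Icc (0 : ℝ) 1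

lemma measurable_treatment : Measurable (treatment (d := d)) :=
  .ite (measurable_snd.fst (measurableSet_singleton true)) measurable_const measurable_const

lemma measurable_outcome : Measurable (outcome (d := d)) :=
  .ite (measurable_snd.snd (measurableSet_singleton true)) measurable_const measurable_const

lemma treatment_mem_Icc (ω : CovSample d) : treatment ω ∈ Set.Icc (0 : ℝ) 1 := by
  unfold treatment
  split_ifs <;> simp

lemma outcome_mem_Icc (ω : CovSample d) : outcome ω ∈ Set.Icc (0 : ℝ) 1 := by
  unfold outcome
  split_ifs <;> simp

section Sums

variable (pX μ π η : (Fin d → ℝ) → ℝ) (x : Fin d → ℝ)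

lemma sum_covDens : ∑ b, covDens d pX μ π η (x, b) = pX x := by
  simp only [Fintype.sum_prod_type, Fintype.sum_bool, covDens, if_true, Bool.false_eq_true,
    if_false]
  ring

lemma sum_covDens_mul_treatment :
    ∑ b, covDens d pX μ π η (x, b) * treatment (x, b) = π x * pX x := by
  simp only [Fintype.sum_prod_type, Fintype.sum_bool, covDens, treatment, if_true,
    Bool.false_eq_true, if_false]
  ring

lemma sum_covDens_mul_outcome :
    ∑ b, covDens d pX μ π η (x, b) * outcome (x, b) = μ x * pX x := by
  simp only [Fintype.sum_prod_type, Fintype.sum_bool, covDens, outcome, if_true,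
    Bool.false_eq_true, if_false]
  ring

end Sums

namespace IsCovModel

variable {pX μ π η : (Fin d → ℝ) → ℝ} (M : IsCovModel pX μ π η)

include M

lemma covDens_nonneg (ω : CovSample d) : 0 ≤ covDens d pX μ π η ω := by
  obtain ⟨x, a, y⟩ := ω
  have hπ := M.π_mem x
  have h₁ := M.treated_mem x
  have h₀ := M.untreated_mem x
  refine mul_nonneg (mul_nonneg (M.pX_nonneg x) ?_) ?_
  · split_ifs
    exacts [hπ.1, sub_nonneg.2 hπ.2]
  · split_ifs
    exacts [h₁.1, sub_nonneg.2 h₁.2, h₀.1, sub_nonneg.2 h₀.2]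

lemma measurable_covDens : Measurable (covDens d pX μ π η) := by
  have := M.measurable_pX
  have := M.measurable_μ
  have := M.measurable_π
  have := M.measurable_η
  refine measurable_from_prod_countable_left fun b => ?_
  obtain ⟨a, y⟩ := b
  cases a <;> cases y <;>
    simp only [covDens, if_true, Bool.false_eq_true, if_false] <;> fun_prop

lemma map_fst_covLaw :
    (covLaw d pX μ π η).map Prod.fst = volume.withDensity fun x => ENNReal.ofReal (pX x) := by
  ext T hT
  have hdens := M.measurable_covDens.ennreal_ofReal
  rw [Measure.map_apply measurable_fst hT, covLaw, withDensity_apply _ (measurable_fst hT),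
    withDensity_apply _ hT, ← Set.prod_univ, ← Measure.prod_restrict, Measure.restrict_univ,
    lintegral_prod _ hdens.aemeasurable]
  refine lintegral_congr fun x => ?_
  rw [← sum_covDens pX μ π η x, ENNReal.ofReal_sum_of_nonneg fun b _ => M.covDens_nonneg (x, b),
    count_prod_count, lintegral_count, tsum_fintype]

lemma isProbabilityMeasure_covLaw : IsProbabilityMeasure (covLaw d pX μ π η) := by
  have integrable_pX : Integrable pX :=
    .of_integral_ne_zero (M.integral_pX.trans_ne one_ne_zero)
  have : IsProbabilityMeasure ((covLaw d pX μ π η).map Prod.fst) := by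
    constructor
    rw [M.map_fst_covLaw, withDensity_apply _ .univ, Measure.restrict_univ,
      ← ofReal_integral_eq_lintegral_ofReal integrable_pX (ae_of_all _ M.pX_nonneg),
      M.integral_pX, ENNReal.ofReal_one]
  exact Measure.isProbabilityMeasure_of_map Prod.fst

lemma setIntegral_comp_fst {h : (Fin d → ℝ) → ℝ} (hh : Measurable h) {T : Set (Fin d → ℝ)}
    (hT : MeasurableSet T) :
    ∫ ω in Prod.fst ⁻¹' T, h ω.1 ∂(covLaw d pX μ π η) = ∫ x in T, h x * pX x := by
  rw [← setIntegral_map hT hh.aestronglyMeasurable measurable_fst.aemeasurable, M.map_fst_covLaw,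
    setIntegral_withDensity_eq_setIntegral_toReal_smul M.measurable_pX.ennreal_ofReal
      (ae_of_all _ fun _ => ENNReal.ofReal_lt_top) _ hT]
  simp only [ENNReal.toReal_ofReal (M.pX_nonneg _), smul_eq_mul, mul_comm]

lemma integral_comp_fst {h : (Fin d → ℝ) → ℝ} (hh : Measurable h) :
    ∫ ω, h ω.1 ∂(covLaw d pX μ π η) = ∫ x, h x * pX x := by
  simpa using M.setIntegral_comp_fst hh .univ

lemma setIntegral_fst_preimage {f : CovSample d → ℝ} (hf : Integrable f (covLaw d pX μ π η))
    {T : Set (Fin d → ℝ)} (hT : MeasurableSet T) :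
    ∫ ω in Prod.fst ⁻¹' T, f ω ∂(covLaw d pX μ π η) =
      ∫ x in T, ∑ b, covDens d pX μ π η (x, b) * f (x, b) := by
  have hdens := M.measurable_covDens.ennreal_ofReal
  have dens_smul : (fun ω => (ENNReal.ofReal (covDens d pX μ π η ω)).toReal • f ω) =
      fun ω => covDens d pX μ π η ω * f ω := by
    simp only [ENNReal.toReal_ofReal (M.covDens_nonneg _), smul_eq_mul]
  rw [covLaw, integrable_withDensity_iff_integrable_smul' hdens
    (ae_of_all _ fun _ => ENNReal.ofReal_lt_top), dens_smul] at hf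
  rw [covLaw, setIntegral_withDensity_eq_setIntegral_toReal_smul hdens
    (ae_of_all _ fun _ => ENNReal.ofReal_lt_top) _ (measurable_fst hT), dens_smul,
    ← Set.prod_univ, setIntegral_prod _ hf.integrableOn]
  refine integral_congr_ae (ae_of_all _ fun x => ?_)
  simp only [count_prod_count, Measure.restrict_univ, integral_count]

lemma condExp_covLaw_ae_eq {f : CovSample d → ℝ} {h : (Fin d → ℝ) → ℝ} (hh : Measurable h)
    (hf : Integrable f (covLaw d pX μ π η))
    (hhi : Integrable (fun ω => h ω.1) (covLaw d pX μ π η))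
    (hfh : ∀ x, ∑ b, covDens d pX μ π η (x, b) * f (x, b) = h x * pX x) :
    (covLaw d pX μ π η)[f | MeasurableSpace.comap Prod.fst inferInstance] =ᵐ[covLaw d pX μ π η]
      fun ω => h ω.1 := by
  have := M.isProbabilityMeasure_covLaw
  refine (ae_eq_condExp_of_forall_setIntegral_eq measurable_fst.comap_le hf ?_ ?_ ?_).symm
  · exact fun _ _ _ => hhi.integrableOn
  · rintro _ ⟨T, hT, rfl⟩ -
    rw [M.setIntegral_comp_fst hh hT, M.setIntegral_fst_preimage hf hT]
    simp only [hfh]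
  · exact (hh.comp (comap_measurable _)).aestronglyMeasurable

lemma condExp_treatment :
    (covLaw d pX μ π η)[treatment | MeasurableSpace.comap Prod.fst inferInstance]
      =ᵐ[covLaw d pX μ π η] fun ω => π ω.1 := by
  have := M.isProbabilityMeasure_covLaw
  exact M.condExp_covLaw_ae_eq M.measurable_π
    (.of_mem_Icc 0 1 measurable_treatment.aemeasurable (ae_of_all _ treatment_mem_Icc))
    (.of_mem_Icc 0 1 (M.measurable_π.comp measurable_fst).aemeasurable
      (ae_of_all _ fun ω => M.π_mem ω.1))
    (sum_covDens_mul_treatment pX μ π η)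

lemma condExp_outcome :
    (covLaw d pX μ π η)[outcome | MeasurableSpace.comap Prod.fst inferInstance]
      =ᵐ[covLaw d pX μ π η] fun ω => μ ω.1 := by
  have := M.isProbabilityMeasure_covLaw
  exact M.condExp_covLaw_ae_eq M.measurable_μ
    (.of_mem_Icc 0 1 measurable_outcome.aemeasurable (ae_of_all _ outcome_mem_Icc))
    (.of_mem_Icc 0 1 (M.measurable_μ.comp measurable_fst).aemeasurable
      (ae_of_all _ fun ω => M.μ_mem ω.1))
    (sum_covDens_mul_outcome pX μ π η)

lemma covFunc_eq : covFunc d pX μ π η = ∫ ω, treatment ω * outcome ω ∂(covLaw d pX μ π η) -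
    ∫ ω, π ω.1 * μ ω.1 ∂(covLaw d pX μ π η) := by
  rw [M.integral_comp_fst (h := fun x => π x * μ x) (M.measurable_π.mul M.measurable_μ)]
  rfl

end IsCovModel

end BinaryModel

/-- Theorem 2, part 3, first-order: if the truth lies in `𝒢(rₙ, sₙ)` then
the first-order estimator `ψ̂_fo = (1/n)∑ᵢ (Aᵢ - π̂(Xᵢ))(Yᵢ - μ̂(Xᵢ))` of the expected
conditional covariance satisfies `E(ψ̂_fo - ψ^cov)² ≲ rₙ sₙ + 1/n`. -/
theorem stmt9 :
    ∃ C > (0 : ℝ),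
      ∀ (d n : ℕ), 0 < n →
      ∀ pX : (Fin d → ℝ) → ℝ, Measurable pX → (∀ x, 0 ≤ pX x) → (∫ x, pX x = 1) →
      ∀ μ π η : (Fin d → ℝ) → ℝ, Measurable μ → Measurable π → Measurable η →
        (∀ x, 0 ≤ μ x ∧ μ x ≤ 1) → (∀ x, 0 ≤ π x ∧ π x ≤ 1) →
        (∀ x, 0 ≤ μ x + (1 - π x) * η x ∧ μ x + (1 - π x) * η x ≤ 1) →
        (∀ x, 0 ≤ μ x - π x * η x ∧ μ x - π x * η x ≤ 1) →
      ∀ muhat pihat : (Fin d → ℝ) → ℝ, Measurable muhat → Measurable pihat →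
        (∀ x, 0 ≤ muhat x ∧ muhat x ≤ 1) → (∀ x, 0 ≤ pihat x ∧ pihat x ≤ 1) →
      ∀ r s : ℝ, 0 < r → 0 < s →
        Integrable (fun x => (μ x - muhat x) ^ 2 * pX x) →
        (∫ x, (μ x - muhat x) ^ 2 * pX x) ≤ r →
        Integrable (fun x => (π x - pihat x) ^ 2 * pX x) →
        (∫ x, (π x - pihat x) ^ 2 * pX x) ≤ s →
      ∫⁻ ω, ENNReal.ofReal
          ((((1 : ℝ) / n) * (∑ i : Fin n,
              ((if (ω i).2.1 then (1 : ℝ) else 0) - pihat (ω i).1) *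
              ((if (ω i).2.2 then (1 : ℝ) else 0) - muhat (ω i).1)) -
            covFunc d pX μ π η) ^ 2)
          ∂(Measure.pi fun _ : Fin n => covLaw d pX μ π η) ≤
        ENNReal.ofReal (C * (r * s + 1 / n)) := by
  refine ⟨1, one_pos, fun d n hn pX hpm hp0 hp1 μ π η hμm hπm hηm hμ hπ h₁ h₀ muhat pihat hmm hpim
    hmuhat hpihat r s _ _ _ hr _ hs => ?_⟩
  have M : IsCovModel pX μ π η := ⟨hpm, hp0, hp1, hμm, hπm, hηm, hμ, hπ, h₁, h₀⟩
  have := M.isProbabilityMeasure_covLaw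
  rw [one_mul, M.covFunc_eq]
  have hX : Measurable[MeasurableSpace.comap Prod.fst inferInstance]
    (Prod.fst : CovSample d → Fin d → ℝ) := comap_measurable _
  exact stmt9_general measurable_fst.comap_le hn.ne'
    measurable_treatment.aestronglyMeasurable measurable_outcome.aestronglyMeasurable
    (ae_of_all _ treatment_mem_Icc) (ae_of_all _ outcome_mem_Icc)
    M.condExp_treatment M.condExp_outcome
    (hpim.comp hX).aestronglyMeasurable (hmm.comp hX).aestronglyMeasurable
    (ae_of_all _ fun ω => hpihat ω.1) (ae_of_all _ fun ω => hmuhat ω.1)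
    ((M.integral_comp_fst ((hμm.sub hmm).pow_const 2)).trans_le hr)
    ((M.integral_comp_fst ((hπm.sub hpim).pow_const 2)).trans_le hs)
end
end

section
/- Constrained risk inequality: fix θ and define D₁ = N(θ, I/n) and D₂ = N((1 + α/‖θ‖₂) θ, I/n). Let P₁ denote one of D₁, D₂ and P₂ the other. If an estimator Q̂ of the quadratic functional satisfies E_{P₁}(Q̂ − Q(P₁))² ≤ β², then E_{P₂}(Q̂ − Q(P₂))² ≥ [α² + 2α‖θ‖₂ − β exp(n α²/2)]₊², where [x]₊ = max(x, 0). -/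
open MeasureTheory ProbabilityTheory
open scoped ENNReal NNReal

noncomputable section

/-- The Gaussian distribution `N(θ, I/n)` on `ℝ^d`. -/
def gaussPi (d n : ℕ) (θ : Fin d → ℝ) : Measure (Fin d → ℝ) :=
  Measure.pi fun i => gaussianReal (θ i) ((n : ℝ≥0))⁻¹

/-! Change of measure: if `P₂` has density `L` with respect to `P₁`, Hölder's inequality bounds
`E_{P₂}|T - y₁| = E_{P₁}[L |T - y₁|]` by the `L^q(P₁)` norm of `L` times the `L^p(P₁)` risk of `T`
at `y₁`, so by the triangle inequality a small risk at `y₁` under `P₁` forces a risk of almost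
`|y₁ - y₂|` at `y₂` under `P₂`. The likelihood ratio of two Gaussians with the same variance is
explicit: its `q`-th power is, up to a constant, again such a likelihood ratio, which gives its
`L^q` norm. For `q = 2` and means at distance `α` under `N(·, I/n)` this norm is
`exp (n α² / 2)`. -/

section ChangeOfMeasure

variable {Ω E : Type*} [MeasurableSpace Ω] [PseudoEMetricSpace E] [MeasurableSpace E]
  [OpensMeasurableSpace E] {p q : ℝ} {L : Ω → ℝ≥0∞} {T : Ω → E}

theorem lintegral_le_Lp_of_isProbabilityMeasure (P : Measure Ω) [IsProbabilityMeasure P]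
    (hp : 1 ≤ p) {f : Ω → ℝ≥0∞} (hf : AEMeasurable f P) :
    ∫⁻ x, f x ∂P ≤ (∫⁻ x, f x ^ p ∂P) ^ (1 / p) := by
  simpa [eLpNorm'] using eLpNorm'_le_eLpNorm'_of_exponent_le one_pos hp P hf.aestronglyMeasurable

theorem lintegral_withDensity_le_Lq_mul_Lp (P : Measure Ω) (hpq : q.HolderConjugate p)
    (hL : AEMeasurable L P) {f : Ω → ℝ≥0∞} (hf : AEMeasurable f P) :
    ∫⁻ x, f x ∂P.withDensity L ≤
      (∫⁻ x, L x ^ q ∂P) ^ (1 / q) * (∫⁻ x, f x ^ p ∂P) ^ (1 / p) := by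
  rw [lintegral_withDensity_eq_lintegral_mul₀ hL hf]
  exact ENNReal.lintegral_mul_le_Lp_mul_Lq P hpq hL hf

theorem edist_le_Lq_mul_Lp_add_Lp_withDensity (P : Measure Ω) (hpq : q.HolderConjugate p)
    (hL : AEMeasurable L P) [IsProbabilityMeasure (P.withDensity L)] (hT : AEMeasurable T P)
    (y₁ y₂ : E) :
    edist y₁ y₂ ≤
      (∫⁻ x, L x ^ q ∂P) ^ (1 / q) * (∫⁻ x, edist (T x) y₁ ^ p ∂P) ^ (1 / p) +
        (∫⁻ x, edist (T x) y₂ ^ p ∂P.withDensity L) ^ (1 / p) := by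
  have hdist (y : E) : AEMeasurable (fun x => edist (T x) y) P :=
    measurable_edist_left.comp_aemeasurable hT
  have hac : P.withDensity L ≪ P := withDensity_absolutelyContinuous P L
  calc
    edist y₁ y₂ = ∫⁻ _, edist y₁ y₂ ∂P.withDensity L := by simp
    _ ≤ ∫⁻ x, (edist (T x) y₁ + edist (T x) y₂) ∂P.withDensity L :=
      lintegral_mono fun x => edist_triangle_left y₁ y₂ (T x)
    _ = ∫⁻ x, edist (T x) y₁ ∂P.withDensity L + ∫⁻ x, edist (T x) y₂ ∂P.withDensity L :=
      lintegral_add_left' ((hdist y₁).mono_ac hac) _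
    _ ≤ _ := add_le_add (lintegral_withDensity_le_Lq_mul_Lp P hpq hL (hdist y₁))
      (lintegral_le_Lp_of_isProbabilityMeasure _ hpq.symm.lt.le ((hdist y₂).mono_ac hac))

end ChangeOfMeasure

section ProductMeasure

theorem indicator_univ_pi_prod_apply {ι M : Type*} [Fintype ι] [CommMonoidWithZero M]
    {X : ι → Type*} (s : ∀ i, Set (X i)) (f : ∀ i, X i → M) (x : ∀ i, X i) :
    (Set.univ.pi s).indicator (fun x => ∏ i, f i (x i)) x = ∏ i, (s i).indicator (f i) (x i) := by
  by_cases hx : ∀ i, x i ∈ s i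
  · simp [hx]
  · obtain ⟨i, hi⟩ := not_forall.1 hx
    rw [Set.indicator_of_notMem (by simpa using hx),
      Finset.prod_eq_zero (Finset.mem_univ i) (Set.indicator_of_notMem hi _)]

variable {ι : Type*} [Fintype ι] {X : ι → Type*} [∀ i, MeasurableSpace (X i)]
  (μ : ∀ i, Measure (X i)) [∀ i, IsProbabilityMeasure (μ i)] {f : ∀ i, X i → ℝ≥0∞}

theorem lintegral_pi_prod_eq_prod_lintegral (hf : ∀ i, Measurable (f i)) :
    ∫⁻ x, ∏ i, f i (x i) ∂Measure.pi μ = ∏ i, ∫⁻ y, f i y ∂μ i := by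
  rw [lintegral_prod_eq_prod_lintegral_of_indepFun Finset.univ
    (fun i (x : ∀ i, X i) => f i (x i)) (iIndepFun_pi fun i => (hf i).aemeasurable)
    fun i => (hf i).comp (measurable_pi_apply i)]
  exact Finset.prod_congr rfl fun i _ => (measurePreserving_eval μ i).lintegral_comp (hf i)

theorem pi_withDensity_eq_withDensity_prod (hf : ∀ i, Measurable (f i))
    [∀ i, SigmaFinite ((μ i).withDensity (f i))] :
    Measure.pi (fun i => (μ i).withDensity (f i)) =
      (Measure.pi μ).withDensity fun x => ∏ i, f i (x i) := by
  refine Measure.pi_eq fun s hs => ?_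
  rw [withDensity_apply _ (.univ_pi hs), ← lintegral_indicator (.univ_pi hs)]
  simp_rw [indicator_univ_pi_prod_apply]
  rw [lintegral_pi_prod_eq_prod_lintegral μ fun i => (hf i).indicator (hs i)]
  refine Finset.prod_congr rfl fun i _ => ?_
  rw [withDensity_apply _ (hs i), lintegral_indicator (hs i)]

end ProductMeasure

section GaussianLikelihoodRatio

/-- The likelihood ratio `dN(b, v) / dN(a, v)` of two real Gaussians with common variance `v`, as
an explicit function. -/
def gaussianLR (v : ℝ≥0) (a b x : ℝ) : ℝ≥0∞ :=
  ENNReal.ofReal (Real.exp ((b - a) * (x - (a + b) / 2) / v))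

theorem measurable_gaussianLR (v : ℝ≥0) (a b : ℝ) : Measurable (gaussianLR v a b) := by
  unfold gaussianLR
  fun_prop

variable {v : ℝ≥0}

theorem gaussianPDF_mul_gaussianLR (hv : v ≠ 0) (a b x : ℝ) :
    gaussianPDF a v x * gaussianLR v a b x = gaussianPDF b v x := by
  have hv' : (v : ℝ) ≠ 0 := NNReal.coe_ne_zero.2 hv
  have hexp : -(x - a) ^ 2 / (2 * v) + (b - a) * (x - (a + b) / 2) / v =
      -(x - b) ^ 2 / (2 * v) := by
    field_simp
    ring
  rw [gaussianPDF, gaussianLR, ← ENNReal.ofReal_mul (gaussianPDFReal_nonneg a v x),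
    gaussianPDFReal, mul_assoc, ← Real.exp_add, hexp, gaussianPDF, gaussianPDFReal]

theorem gaussianReal_withDensity_gaussianLR (hv : v ≠ 0) (a b : ℝ) :
    (gaussianReal a v).withDensity (gaussianLR v a b) = gaussianReal b v := by
  rw [gaussianReal_of_var_ne_zero a hv, gaussianReal_of_var_ne_zero b hv,
    ← withDensity_mul _ (measurable_gaussianPDF a v) (measurable_gaussianLR v a b)]
  exact congrArg _ (funext (gaussianPDF_mul_gaussianLR hv a b))

theorem gaussianLR_rpow (v : ℝ≥0) (a b q x : ℝ) :
    gaussianLR v a b x ^ q =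
      ENNReal.ofReal (Real.exp (q * (q - 1) * (b - a) ^ 2 / (2 * v))) *
        gaussianLR v a (a + q * (b - a)) x := by
  rw [gaussianLR, gaussianLR, ENNReal.ofReal_rpow_of_pos (Real.exp_pos _), ← Real.exp_mul,
    ← ENNReal.ofReal_mul (Real.exp_nonneg _), ← Real.exp_add]
  congr 2
  ring

theorem lintegral_gaussianLR_rpow (hv : v ≠ 0) (a b q : ℝ) :
    ∫⁻ x, gaussianLR v a b x ^ q ∂gaussianReal a v =
      ENNReal.ofReal (Real.exp (q * (q - 1) * (b - a) ^ 2 / (2 * v))) := by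
  have htotal (c : ℝ) : ∫⁻ x, gaussianLR v a c x ∂gaussianReal a v = 1 := by
    rw [← setLIntegral_univ, ← withDensity_apply _ .univ,
      gaussianReal_withDensity_gaussianLR hv, measure_univ]
  simp_rw [gaussianLR_rpow]
  rw [lintegral_const_mul _ (measurable_gaussianLR _ _ _), htotal, mul_one]

variable {ι : Type*} [Fintype ι]

theorem pi_gaussianReal_eq_withDensity (hv : v ≠ 0) (a b : ι → ℝ) :
    Measure.pi (fun i => gaussianReal (b i) v) =
      (Measure.pi fun i => gaussianReal (a i) v).withDensity
        fun x => ∏ i, gaussianLR v (a i) (b i) (x i) := by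
  have hLR (i : ι) := gaussianReal_withDensity_gaussianLR hv (a i) (b i)
  have (i : ι) : SigmaFinite ((gaussianReal (a i) v).withDensity (gaussianLR v (a i) (b i))) := by
    rw [hLR i]
    infer_instance
  rw [← pi_withDensity_eq_withDensity_prod _ fun i => measurable_gaussianLR v (a i) (b i)]
  simp_rw [hLR]

theorem lintegral_prod_gaussianLR_rpow (hv : v ≠ 0) (a b : ι → ℝ) (q : ℝ) :
    ∫⁻ x, (∏ i, gaussianLR v (a i) (b i) (x i)) ^ q ∂Measure.pi (fun i => gaussianReal (a i) v) =
      ENNReal.ofReal (Real.exp (q * (q - 1) * (∑ i, (b i - a i) ^ 2) / (2 * v))) := by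
  have hpow (x : ι → ℝ) := ENNReal.prod_rpow_of_ne_top (s := Finset.univ)
    (f := fun i => gaussianLR v (a i) (b i) (x i)) (fun _ _ => ENNReal.ofReal_ne_top) q
  simp_rw [← hpow]
  rw [lintegral_pi_prod_eq_prod_lintegral (fun i => gaussianReal (a i) v)
    fun i => (measurable_gaussianLR v (a i) (b i)).pow_const q]
  simp_rw [lintegral_gaussianLR_rpow hv]
  rw [← ENNReal.ofReal_prod_of_nonneg fun i _ => Real.exp_nonneg _, ← Real.exp_sum,
    ← Finset.sum_div, ← Finset.mul_sum]

end GaussianLikelihoodRatio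

section GaussianRisk

variable {ι : Type*} [Fintype ι] {v : ℝ≥0}

theorem edist_le_exp_mul_Lp_add_Lp_pi_gaussianReal {E : Type*} [PseudoEMetricSpace E]
    [MeasurableSpace E] [OpensMeasurableSpace E] {p q : ℝ} (hpq : q.HolderConjugate p)
    (hv : v ≠ 0) (a b : ι → ℝ) {T : (ι → ℝ) → E}
    (hT : AEMeasurable T (Measure.pi fun i => gaussianReal (a i) v)) (y₁ y₂ : E) :
    edist y₁ y₂ ≤
      ENNReal.ofReal (Real.exp ((q - 1) * (∑ i, (b i - a i) ^ 2) / (2 * v))) *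
          (∫⁻ x, edist (T x) y₁ ^ p ∂Measure.pi fun i => gaussianReal (a i) v) ^ (1 / p) +
        (∫⁻ x, edist (T x) y₂ ^ p ∂Measure.pi fun i => gaussianReal (b i) v) ^ (1 / p) := by
  have hdens := pi_gaussianReal_eq_withDensity hv a b
  have hmeas : Measurable fun x : ι → ℝ => ∏ i, gaussianLR v (a i) (b i) (x i) :=
    Finset.measurable_prod _ fun i _ =>
      (measurable_gaussianLR v (a i) (b i)).comp (measurable_pi_apply i)
  have hnorm : ENNReal.ofReal
        (Real.exp (q * (q - 1) * (∑ i, (b i - a i) ^ 2) / (2 * v))) ^ (1 / q) =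
      ENNReal.ofReal (Real.exp ((q - 1) * (∑ i, (b i - a i) ^ 2) / (2 * v))) := by
    have hq : q ≠ 0 := hpq.ne_zero
    rw [ENNReal.ofReal_rpow_of_pos (Real.exp_pos _), ← Real.exp_mul]
    congr 2
    field_simp
  have : IsProbabilityMeasure ((Measure.pi fun i => gaussianReal (a i) v).withDensity
      fun x => ∏ i, gaussianLR v (a i) (b i) (x i)) := by
    rw [← hdens]
    infer_instance
  rw [← hnorm, ← lintegral_prod_gaussianLR_rpow hv, hdens]
  exact edist_le_Lq_mul_Lp_add_Lp_withDensity _ hpq hmeas.aemeasurable hT y₁ y₂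

theorem ofReal_max_sub_zero_sq_le {x y : ℝ} (hy : 0 ≤ y) {R : ℝ≥0∞}
    (h : ENNReal.ofReal x ≤ ENNReal.ofReal y + R ^ (1 / 2 : ℝ)) :
    ENNReal.ofReal (max (x - y) 0 ^ 2) ≤ R := by
  have hsub : ENNReal.ofReal (x - y) ≤ R ^ (1 / 2 : ℝ) := by
    rw [ENNReal.ofReal_sub _ hy]
    exact tsub_le_iff_left.2 h
  calc
    ENNReal.ofReal (max (x - y) 0 ^ 2) = ENNReal.ofReal (x - y) ^ 2 := by
      rw [ENNReal.ofReal_pow (le_max_right _ _), ENNReal.ofReal_max, ENNReal.ofReal_zero,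
        max_eq_left zero_le]
    _ ≤ (R ^ (1 / 2 : ℝ)) ^ 2 := pow_le_pow_left' hsub 2
    _ = R := by rw [← ENNReal.rpow_natCast, ← ENNReal.rpow_mul]; norm_num

theorem ofReal_sub_sq_eq_edist_rpow_two (x y : ℝ) :
    ENNReal.ofReal ((x - y) ^ 2) = edist x y ^ (2 : ℝ) := by
  rw [edist_dist, Real.dist_eq, ENNReal.rpow_two, ← ENNReal.ofReal_pow (abs_nonneg _), sq_abs]

theorem sq_risk_pi_gaussianReal_ge (hv : v ≠ 0) (a b : ι → ℝ) {β y₁ y₂ : ℝ} (hβ : 0 ≤ β)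
    {T : (ι → ℝ) → ℝ} (hT : AEMeasurable T (Measure.pi fun i => gaussianReal (a i) v))
    (hrisk : ∫⁻ x, ENNReal.ofReal ((T x - y₁) ^ 2) ∂Measure.pi (fun i => gaussianReal (a i) v) ≤
      ENNReal.ofReal (β ^ 2)) :
    ENNReal.ofReal
        (max (|y₁ - y₂| - β * Real.exp ((v : ℝ)⁻¹ * (∑ i, (b i - a i) ^ 2) / 2)) 0 ^ 2) ≤
      ∫⁻ x, ENNReal.ofReal ((T x - y₂) ^ 2) ∂Measure.pi fun i => gaussianReal (b i) v := by
  set c := Real.exp ((v : ℝ)⁻¹ * (∑ i, (b i - a i) ^ 2) / 2) with hc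
  have hexp : Real.exp ((2 - 1) * (∑ i, (b i - a i) ^ 2) / (2 * v)) = c := by
    rw [hc]
    congr 1
    ring
  have hβ_root : ENNReal.ofReal (β ^ 2) ^ (1 / 2 : ℝ) = ENNReal.ofReal β := by
    rw [ENNReal.ofReal_rpow_of_nonneg (sq_nonneg β) (by norm_num), ← Real.sqrt_eq_rpow,
      Real.sqrt_sq hβ]
  have h := edist_le_exp_mul_Lp_add_Lp_pi_gaussianReal Real.HolderConjugate.two_two hv a b hT y₁ y₂
  simp_rw [hexp, ← ofReal_sub_sq_eq_edist_rpow_two] at h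
  refine ofReal_max_sub_zero_sq_le (mul_nonneg hβ (Real.exp_nonneg _)) ?_
  rw [← Real.dist_eq, ← edist_dist, mul_comm β, ENNReal.ofReal_mul (Real.exp_nonneg _), ← hβ_root]
  exact h.trans (by gcongr)

end GaussianRisk

section RadialShift

variable {ι : Type*} [Fintype ι] {θ : ι → ℝ}

theorem sum_sq_pos_of_ne_zero (hθ : θ ≠ 0) : 0 < ∑ i, θ i ^ 2 := by
  obtain ⟨i, hi⟩ := Function.ne_iff.1 hθ
  exact Finset.sum_pos' (fun i _ => sq_nonneg (θ i)) ⟨i, Finset.mem_univ i, sq_pos_of_ne_zero hi⟩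

theorem sum_radial_shift_sub_sq (hθ : θ ≠ 0) (α : ℝ) :
    ∑ i, ((1 + α / Real.sqrt (∑ i, θ i ^ 2)) * θ i - θ i) ^ 2 = α ^ 2 := by
  have hS := sum_sq_pos_of_ne_zero hθ
  calc
    ∑ i, ((1 + α / Real.sqrt (∑ i, θ i ^ 2)) * θ i - θ i) ^ 2 =
        (α / Real.sqrt (∑ i, θ i ^ 2)) ^ 2 * ∑ i, θ i ^ 2 := by
      rw [Finset.mul_sum]
      exact Finset.sum_congr rfl fun i _ => by ring
    _ = α ^ 2 := by rw [div_pow, Real.sq_sqrt hS.le, div_mul_cancel₀ _ hS.ne']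

theorem sq_one_add_div_sqrt_mul_sub_self {S : ℝ} (hS : 0 < S) (α : ℝ) :
    (1 + α / Real.sqrt S) ^ 2 * S - S = α ^ 2 + 2 * α * Real.sqrt S := by
  have hr : Real.sqrt S ≠ 0 := (Real.sqrt_pos.2 hS).ne'
  obtain ⟨r, hrS, rfl⟩ : ∃ r, Real.sqrt S = r ∧ S = r ^ 2 := ⟨_, rfl, (Real.sq_sqrt hS.le).symm⟩
  rw [hrS] at hr ⊢
  field_simp
  ring

end RadialShift

theorem stmt14_general {ι : Type*} [Fintype ι] {v : ℝ≥0} (hv : v ≠ 0) {θ : ι → ℝ} (hθ : θ ≠ 0)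
    {α β : ℝ} (hβ : 0 ≤ β) {Qhat : (ι → ℝ) → ℝ} {P1 P2 : Measure (ι → ℝ)} {v1 v2 : ℝ}
    (hQhat : AEMeasurable Qhat P1)
    (hcases :
      (P1 = Measure.pi (fun i => gaussianReal (θ i) v) ∧ v1 = ∑ i, θ i ^ 2 ∧
        P2 = Measure.pi (fun i =>
          gaussianReal ((1 + α / Real.sqrt (∑ i, θ i ^ 2)) * θ i) v) ∧
        v2 = (1 + α / Real.sqrt (∑ i, θ i ^ 2)) ^ 2 * ∑ i, θ i ^ 2) ∨
      (P1 = Measure.pi (fun i =>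
          gaussianReal ((1 + α / Real.sqrt (∑ i, θ i ^ 2)) * θ i) v) ∧
        v1 = (1 + α / Real.sqrt (∑ i, θ i ^ 2)) ^ 2 * ∑ i, θ i ^ 2 ∧
        P2 = Measure.pi (fun i => gaussianReal (θ i) v) ∧ v2 = ∑ i, θ i ^ 2))
    (hrisk : ∫⁻ x, ENNReal.ofReal ((Qhat x - v1) ^ 2) ∂P1 ≤ ENNReal.ofReal (β ^ 2)) :
    ENNReal.ofReal
        (max (|α ^ 2 + 2 * α * Real.sqrt (∑ i, θ i ^ 2)| -
          β * Real.exp ((v : ℝ)⁻¹ * α ^ 2 / 2)) 0 ^ 2) ≤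
      ∫⁻ x, ENNReal.ofReal ((Qhat x - v2) ^ 2) ∂P2 := by
  rw [← sq_one_add_div_sqrt_mul_sub_self (sum_sq_pos_of_ne_zero hθ),
    ← sum_radial_shift_sub_sq hθ α]
  rcases hcases with ⟨rfl, rfl, rfl, rfl⟩ | ⟨rfl, rfl, rfl, rfl⟩
  · rw [abs_sub_comm]
    exact sq_risk_pi_gaussianReal_ge hv _ _ hβ hQhat hrisk
  · simp_rw [sub_sq_comm (_ * θ _) (θ _)]
    exact sq_risk_pi_gaussianReal_ge hv _ _ hβ hQhat hrisk

/-- constrained risk inequality, after Brown–Low: with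
`D₁ = N(θ, I/n)`, `D₂ = N((1 + α/‖θ‖₂)θ, I/n)`, `Q(N(μ, I/n)) = ‖μ‖₂²`, and `(P₁, P₂)` an
ordering of `(D₁, D₂)`: if `E_{P₁}(Q̂ - Q(P₁))² ≤ β²` then
`E_{P₂}(Q̂ - Q(P₂))² ≥ [α² + 2α‖θ‖₂ - β exp(nα²/2)]₊²`. -/
theorem stmt14 (d n : ℕ) (hn : 0 < n) (θ : Fin d → ℝ) (hθ : θ ≠ 0)
    (α β : ℝ) (hα : 0 ≤ α) (hβ : 0 ≤ β)
    (Qhat : (Fin d → ℝ) → ℝ) (hQhat : Measurable Qhat)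
    (P1 P2 : Measure (Fin d → ℝ)) (v1 v2 : ℝ)
    (hcases :
      (P1 = gaussPi d n θ ∧ v1 = ∑ i, θ i ^ 2 ∧
        P2 = gaussPi d n (fun i => (1 + α / Real.sqrt (∑ i, θ i ^ 2)) * θ i) ∧
        v2 = (1 + α / Real.sqrt (∑ i, θ i ^ 2)) ^ 2 * ∑ i, θ i ^ 2) ∨
      (P1 = gaussPi d n (fun i => (1 + α / Real.sqrt (∑ i, θ i ^ 2)) * θ i) ∧
        v1 = (1 + α / Real.sqrt (∑ i, θ i ^ 2)) ^ 2 * ∑ i, θ i ^ 2 ∧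
        P2 = gaussPi d n θ ∧ v2 = ∑ i, θ i ^ 2))
    (hrisk : ∫⁻ x, ENNReal.ofReal ((Qhat x - v1) ^ 2) ∂P1 ≤ ENNReal.ofReal (β ^ 2)) :
    ENNReal.ofReal
        ((max (α ^ 2 + 2 * α * Real.sqrt (∑ i, θ i ^ 2) -
            β * Real.exp (n * α ^ 2 / 2)) 0) ^ 2) ≤
      ∫⁻ x, ENNReal.ofReal ((Qhat x - v2) ^ 2) ∂P2 := by
  simpa [abs_of_nonneg (by positivity : 0 ≤ α ^ 2 + 2 * α * Real.sqrt (∑ i, θ i ^ 2))] using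
    stmt14_general (v := (n : ℝ≥0)⁻¹) (by positivity) hθ hβ hQhat.aemeasurable hcases hrisk
end
end
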